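/- Let (T,d) be a locally compact, separable metric space and let f_n, f ∈ ℓ∞_loc(T). If f_n converges to f locally uniformly, i.e., sup_{x∈K} |f_n(x) − f(x)| → 0 for every compact K ⊆ T, then f_n hypi-converges to f. -/

import Mathlib

open Filter Topology Metric

variable {T : Type*}

/-- Lower semicontinuous hull of a real-valued function on a metric space,
with values in the extended reals. -/
noncomputable def lscHull [MetricSpace T] (f : T → ℝ) (x : T) : EReal :=
  ⨆ (ε : ℝ) (_ : 0 < ε), ⨅ (y : T) (_ : y ∈ Metric.ball x ε), (f y : EReal)

/-- Upper semicontinuous hull. -/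
noncomputable def uscHull [MetricSpace T] (f : T → ℝ) (x : T) : EReal :=
  ⨅ (ε : ℝ) (_ : 0 < ε), ⨆ (y : T) (_ : y ∈ Metric.ball x ε), (f y : EReal)

/-- Locally bounded: bounded on every compact set. -/
def LocBounded [MetricSpace T] (f : T → ℝ) : Prop :=
  ∀ K : Set T, IsCompact K → ∃ M : ℝ, ∀ x ∈ K, |f x| ≤ M

/-- Hypi-convergence of a sequence of functions via the pointwise criteria. -/
def HypiConv [MetricSpace T] (F : ℕ → T → ℝ) (f : T → ℝ) : Prop :=
  ∀ x : T,
    (∀ u : ℕ → T, Tendsto u atTop (𝓝 x) →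
      lscHull f x ≤ liminf (fun n => ((F n (u n) : ℝ) : EReal)) atTop) ∧
    (∃ u : ℕ → T, Tendsto u atTop (𝓝 x) ∧
      limsup (fun n => ((F n (u n) : ℝ) : EReal)) atTop ≤ lscHull f x) ∧
    (∀ u : ℕ → T, Tendsto u atTop (𝓝 x) →
      limsup (fun n => ((F n (u n) : ℝ) : EReal)) atTop ≤ uscHull f x) ∧
    (∃ u : ℕ → T, Tendsto u atTop (𝓝 x) ∧
      uscHull f x ≤ liminf (fun n => ((F n (u n) : ℝ) : EReal)) atTop)

/-! The hulls of `f` at `x` are the lower and upper limits of `f` along `𝓝 x`. If `u n → x`, then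
`x` together with the range of `u` is a compact set, so uniform convergence on it gives
`F n (u n) - f (u n) → 0`, and every condition of hypi-convergence reduces to the same condition on
`f (u n)`. Those conditions hold because the lower and upper limits bound the limits along
sequences, and are attained along sequences in a first-countable space. -/

section

variable {ι : Type*} {l : Filter ι} [NeBot l]

theorem limsup_add_eq_of_tendsto_zero {u v : ι → EReal} (hv : Tendsto v l (𝓝 0)) :
    limsup (u + v) l = limsup u l := by
  apply le_antisymm
  · simpa [hv.limsup_eq] using EReal.limsup_add_le (u := u) (v := v) (f := l)
      (by simp [hv.limsup_eq]) (by simp [hv.limsup_eq])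
  · simpa [hv.liminf_eq] using EReal.le_limsup_add (u := u) (v := v) (f := l)

theorem limsup_coe_eq_of_tendsto_sub {a b : ι → ℝ} (h : Tendsto (fun i => a i - b i) l (𝓝 0)) :
    limsup (fun i => (a i : EReal)) l = limsup (fun i => (b i : EReal)) l := by
  have hab : (fun i => (a i : EReal)) =
      (fun i => (b i : EReal)) + fun i => ((a i - b i : ℝ) : EReal) := by
    ext i
    rw [Pi.add_apply, ← EReal.coe_add, add_sub_cancel]
  rw [hab]
  exact limsup_add_eq_of_tendsto_zero (EReal.tendsto_coe.2 h)

theorem liminf_coe_eq_of_tendsto_sub {a b : ι → ℝ} (h : Tendsto (fun i => a i - b i) l (𝓝 0)) :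
    liminf (fun i => (a i : EReal)) l = liminf (fun i => (b i : EReal)) l := by
  have hneg : Tendsto (fun i => -a i - -b i) l (𝓝 0) := by
    simpa only [neg_zero, neg_sub, neg_sub_neg] using h.neg
  have hlimsup := limsup_coe_eq_of_tendsto_sub hneg
  simp only [EReal.coe_neg] at hlimsup
  exact neg_injective <| EReal.limsup_neg.symm.trans <| hlimsup.trans EReal.limsup_neg

end

theorem tendsto_sub_comp_of_tendstoUniformlyOn_compact {X E : Type*} [TopologicalSpace X]
    [SeminormedAddCommGroup E] {F : ℕ → X → E} {f : X → E}
    (h : ∀ K : Set X, IsCompact K → TendstoUniformlyOn F f atTop K)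
    {u : ℕ → X} {x : X} (hu : Tendsto u atTop (𝓝 x)) :
    Tendsto (fun n => F n (u n) - f (u n)) atTop (𝓝 0) := by
  rw [Metric.tendsto_nhds]
  intro ε hε
  filter_upwards [Metric.tendstoUniformlyOn_iff.1 (h _ hu.isCompact_insert_range) ε hε] with n hn
  rw [dist_zero_right, ← dist_eq_norm, dist_comm]
  exact hn (u n) (Set.mem_insert_of_mem x (Set.mem_range_self n))

theorem lscHull_eq_liminf [MetricSpace T] (f : T → ℝ) (x : T) :
    lscHull f x = liminf (fun y => (f y : EReal)) (𝓝 x) :=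
  Metric.nhds_basis_ball.liminf_eq_iSup_iInf.symm

theorem uscHull_eq_limsup [MetricSpace T] (f : T → ℝ) (x : T) :
    uscHull f x = limsup (fun y => (f y : EReal)) (𝓝 x) :=
  Metric.nhds_basis_ball.limsup_eq_iInf_iSup.symm

theorem hypiConv_of_tendsto_sub_comp [MetricSpace T] {F : ℕ → T → ℝ} {f : T → ℝ}
    (h : ∀ (x : T) (u : ℕ → T), Tendsto u atTop (𝓝 x) →
      Tendsto (fun n => F n (u n) - f (u n)) atTop (𝓝 0)) :
    HypiConv F f := by
  intro x
  rw [lscHull_eq_liminf, uscHull_eq_limsup]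
  refine ⟨fun u hu => ?_, ?_, fun u hu => ?_, ?_⟩
  · rw [liminf_coe_eq_of_tendsto_sub (h x u hu)]
    exact hu.liminf_le_liminf_comp (u := fun y => (f y : EReal))
  · obtain ⟨u, hfu, hu⟩ := exists_seq_tendsto_liminf (f := 𝓝 x) (u := fun y => (f y : EReal))
    exact ⟨u, hu, (limsup_coe_eq_of_tendsto_sub (h x u hu)).trans_le hfu.limsup_eq.le⟩
  · rw [limsup_coe_eq_of_tendsto_sub (h x u hu)]
    exact hu.limsup_comp_le_limsup (u := fun y => (f y : EReal))
  · obtain ⟨u, hfu, hu⟩ := exists_seq_tendsto_limsup (f := 𝓝 x) (u := fun y => (f y : EReal))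
    exact ⟨u, hu, hfu.liminf_eq.ge.trans_eq (liminf_coe_eq_of_tendsto_sub (h x u hu)).symm⟩

theorem stmt19_general [MetricSpace T] (F : ℕ → T → ℝ) (f : T → ℝ)
    (hunif : ∀ K : Set T, IsCompact K →
      ∀ ε > (0 : ℝ), ∀ᶠ n in atTop, ∀ x ∈ K, |F n x - f x| < ε) :
    HypiConv F f := by
  have hunifOn (K : Set T) (hK : IsCompact K) : TendstoUniformlyOn F f atTop K := by
    simpa only [Metric.tendstoUniformlyOn_iff, Real.dist_eq, abs_sub_comm (f _)] using hunif K hK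
  exact hypiConv_of_tendsto_sub_comp fun _ _ hu =>
    tendsto_sub_comp_of_tendstoUniformlyOn_compact hunifOn hu

/-- STATEMENT 19: locally uniform convergence implies hypi-convergence. -/
theorem stmt19 [MetricSpace T] [LocallyCompactSpace T] [TopologicalSpace.SeparableSpace T]
    (F : ℕ → T → ℝ) (f : T → ℝ)
    (hF : ∀ n, LocBounded (F n)) (hf : LocBounded f)
    (hunif : ∀ K : Set T, IsCompact K →
      ∀ ε > (0 : ℝ), ∀ᶠ n in atTop, ∀ x ∈ K, |F n x - f x| < ε) :
    HypiConv F f :=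
  stmt19_general F f hunif
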